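/- arXiv:1507.00369 — 2 statements merged into one kernel-verified Lean document; each statement's English description precedes it below -/
import Mathlib

section
/- Every natural number N can be written as the sum of three terms of the sequence (⌊n²/20⌋)_{n∈ℕ}, i.e., there exist natural numbers A, B, C with N = ⌊A²/20⌋ + ⌊B²/20⌋ + ⌊C²/20⌋. -/
/-!
One of `20 * N + 11` and `20 * N + 15` is congruent to `3` modulo `8`, hence a sum of three odd
squares. An odd square leaves a remainder at most `9` modulo `20`, so the three remainders add up
to at most `27`; being congruent to `11` or `15`, their sum is `11` or `15`, and the three quotients
add up to `N`.

For the three squares, Dirichlet's theorem and quadratic reciprocity place `n ≡ 3 (mod 8)` on the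
diagonal of a positive definite integral `3 × 3` matrix of determinant `1`. Hermite's inequality
`min M ≤ (4/3) ^ ((k - 1) / 2) * (det M) ^ (1 / k)` shows that such a form represents `1`, in every
dimension `k ≤ 5`, so that a square can be split off and the form is a sum of squares of integral
linear forms.
-/

open Matrix

section Congruence

variable {ι R : Type*} [Fintype ι] [CommRing R]

lemma transpose_mul_mul_apply_self (M U : Matrix ι ι R) (i : ι) :
    (Uᵀ * M * U) i i = U.col i ⬝ᵥ M *ᵥ U.col i := by
  rw [Matrix.mul_assoc]
  rfl

variable [DecidableEq ι]

/-- Congruence of square matrices over a ring: `M` and `N` are Gram matrices of one bilinear form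
with respect to two bases, related by the invertible matrix `U`. -/
def IsCongruent (M N : Matrix ι ι R) : Prop :=
  ∃ U : Matrix ι ι R, IsUnit U ∧ N = Uᵀ * M * U

namespace IsCongruent

variable {M N K : Matrix ι ι R}

lemma refl (M : Matrix ι ι R) : IsCongruent M M :=
  ⟨1, isUnit_one, by simp⟩

lemma symm (h : IsCongruent M N) : IsCongruent N M := by
  obtain ⟨U, hU, rfl⟩ := h
  have hdet : IsUnit U.det := (isUnit_iff_isUnit_det U).1 hU
  refine ⟨U⁻¹, isUnit_nonsing_inv_iff.2 hU, ?_⟩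
  calc M = (U * U⁻¹)ᵀ * M * (U * U⁻¹) := by simp [mul_nonsing_inv U hdet]
    _ = U⁻¹ᵀ * (Uᵀ * M * U) * U⁻¹ := by simp only [transpose_mul, Matrix.mul_assoc]

lemma trans (hMN : IsCongruent M N) (hNK : IsCongruent N K) : IsCongruent M K := by
  obtain ⟨U, hU, rfl⟩ := hMN
  obtain ⟨V, hV, rfl⟩ := hNK
  exact ⟨U * V, hU.mul hV, by simp only [transpose_mul, Matrix.mul_assoc]⟩

lemma submatrix_perm (M : Matrix ι ι R) (σ : Equiv.Perm ι) :
    IsCongruent M (M.submatrix σ σ) := by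
  refine ⟨(1 : Matrix ι ι R).submatrix id σ,
    (isUnit_submatrix_equiv (Equiv.refl ι) σ).2 isUnit_one, ?_⟩
  ext i j
  simp [Matrix.mul_apply, Matrix.one_apply]

lemma det_eq {M N : Matrix ι ι ℤ} (h : IsCongruent M N) : N.det = M.det := by
  obtain ⟨U, hU, rfl⟩ := h
  have hsq : U.det * U.det = 1 := Int.isUnit_mul_self ((isUnit_iff_isUnit_det U).1 hU)
  rw [det_mul, det_mul, det_transpose]
  linear_combination M.det * hsq

lemma posDef [PartialOrder R] [StarRing R] [TrivialStar R] (h : IsCongruent M N)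
    (hM : M.PosDef) : N.PosDef := by
  obtain ⟨U, hU, rfl⟩ := h
  simpa only [conjTranspose_eq_transpose_of_trivial] using
    hM.conjTranspose_mul_mul_same (mulVec_injective_of_isUnit hU)

lemma exists_eq_transpose_mul_self (h : IsCongruent M N) (hM : ∃ W : Matrix ι ι R, M = Wᵀ * W) :
    ∃ W : Matrix ι ι R, N = Wᵀ * W := by
  obtain ⟨U, -, rfl⟩ := h
  obtain ⟨W, rfl⟩ := hM
  exact ⟨W * U, by simp only [transpose_mul, Matrix.mul_assoc]⟩

end IsCongruent

end Congruence

section Chio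

variable {R : Type*} [CommRing R] {n : ℕ}

/-- Chiò condensation of `M` at its corner entry: the Schur complement of that entry, multiplied by
it so that no division occurs. -/
def chio (M : Matrix (Fin (n + 1)) (Fin (n + 1)) R) : Matrix (Fin n) (Fin n) R :=
  M 0 0 • M.submatrix Fin.succ Fin.succ - vecMulVec (fun i ↦ M i.succ 0) fun j ↦ M 0 j.succ

lemma chio_apply (M : Matrix (Fin (n + 1)) (Fin (n + 1)) R) (i j : Fin n) :
    chio M i j = M 0 0 * M i.succ j.succ - M i.succ 0 * M 0 j.succ :=
  rfl

/-- The block upper triangular matrix `[a, v; 0, D]` with a `1 × 1` corner; a substitute for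
`Matrix.fromBlocks` that keeps `Fin (n + 1)` as index type. -/
def blockUpper (a : R) (v : Fin n → R) (D : Matrix (Fin n) (Fin n) R) :
    Matrix (Fin (n + 1)) (Fin (n + 1)) R :=
  of (Fin.cons (Fin.cons a v) fun i ↦ Fin.cons 0 (D i))

lemma det_blockUpper (a : R) (v : Fin n → R) (D : Matrix (Fin n) (Fin n) R) :
    (blockUpper a v D).det = a * D.det := by
  simp only [det_succ_column_zero, blockUpper, Fin.sum_univ_succ, of_apply, Fin.cons_zero,
    Fin.cons_succ, mul_zero, zero_mul, Finset.sum_const_zero, add_zero, Fin.val_zero, pow_zero,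
    one_mul]
  rfl

lemma isUnit_blockUpper_one {D : Matrix (Fin n) (Fin n) R} (hD : IsUnit D) (v : Fin n → R) :
    IsUnit (blockUpper 1 v D) := by
  rwa [isUnit_iff_isUnit_det, det_blockUpper, one_mul, ← isUnit_iff_isUnit_det]

-- Column operations clear the first row of `M` outside the corner and turn the block into `chio M`.
lemma corner_mul_det_chio (M : Matrix (Fin (n + 1)) (Fin (n + 1)) R) :
    M 0 0 * (chio M).det = M 0 0 ^ n * M.det := by
  set E := blockUpper 1 (fun j ↦ -M 0 j.succ) (M 0 0 • 1) with hE
  have hME : (M * E)ᵀ = blockUpper (M 0 0) (fun i ↦ M i.succ 0) (chio M)ᵀ := by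
    ext i j
    cases i using Fin.cases <;> cases j using Fin.cases <;>
      simp [hE, blockUpper, chio_apply, Matrix.mul_apply, Fin.sum_univ_succ, Matrix.one_apply,
        mul_comm, sub_eq_neg_add]
  calc M 0 0 * (chio M).det = (M * E)ᵀ.det := by rw [hME, det_blockUpper, det_transpose]
    _ = M 0 0 ^ n * M.det := by
      rw [det_transpose, det_mul, hE, det_blockUpper, det_smul, det_one, Fintype.card_fin]
      ring

lemma corner_mul_dotProduct_mulVec (M : Matrix (Fin (n + 1)) (Fin (n + 1)) R)
    (x y : Fin (n + 1) → R) :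
    M 0 0 * (x ⬝ᵥ M *ᵥ y) =
      (x ᵥ* M) 0 * (M *ᵥ y) 0 + Fin.tail x ⬝ᵥ chio M *ᵥ Fin.tail y := by
  have hx : (x ᵥ* M) 0 = x 0 * M 0 0 + Fin.tail x ⬝ᵥ fun i ↦ M i.succ 0 :=
    Fin.sum_univ_succ _
  have hy : (M *ᵥ y) 0 = M 0 0 * y 0 + (fun j ↦ M 0 j.succ) ⬝ᵥ Fin.tail y :=
    Fin.sum_univ_succ _
  have hy_tail : Fin.tail (M *ᵥ y) =
      y 0 • (fun i ↦ M i.succ 0) + M.submatrix Fin.succ Fin.succ *ᵥ Fin.tail y := by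
    ext i
    simp [Fin.tail, mulVec, dotProduct, Fin.sum_univ_succ, mul_comm]
  have hxy : x ⬝ᵥ M *ᵥ y = x 0 * (M *ᵥ y) 0 + Fin.tail x ⬝ᵥ Fin.tail (M *ᵥ y) :=
    Fin.sum_univ_succ _
  rw [hxy, hy_tail, hx, hy, chio, sub_mulVec, smul_mulVec, vecMulVec_mulVec]
  simp only [dotProduct_add, dotProduct_sub, dotProduct_smul, smul_eq_mul, op_smul_eq_smul]
  ring

variable {M : Matrix (Fin (n + 1)) (Fin (n + 1)) R}

lemma isSymm_chio (hM : M.IsSymm) : (chio M).IsSymm := by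
  ext i j
  simp only [transpose_apply, chio_apply, hM.apply, mul_comm]

lemma corner_mul_dotProduct_mulVec_self (hM : M.IsSymm) (x : Fin (n + 1) → R) :
    M 0 0 * (x ⬝ᵥ M *ᵥ x) = (M *ᵥ x) 0 ^ 2 + Fin.tail x ⬝ᵥ chio M *ᵥ Fin.tail x := by
  have hvec : x ᵥ* M = M *ᵥ x := by rw [← mulVec_transpose, hM.eq]
  rw [corner_mul_dotProduct_mulVec, hvec, sq]

lemma eq_transpose_mul_self_of_chio_eq (hM : M.IsSymm) (hcorner : M 0 0 = 1)
    {V : Matrix (Fin n) (Fin n) R} (hV : chio M = Vᵀ * V) :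
    M = (blockUpper 1 (fun j ↦ M 0 j.succ) V)ᵀ * blockUpper 1 (fun j ↦ M 0 j.succ) V := by
  have hblock (i j : Fin n) :
      M i.succ j.succ = M 0 i.succ * M 0 j.succ + ∑ k, V k i * V k j := by
    have hVij : M 0 0 * M i.succ j.succ - M i.succ 0 * M 0 j.succ = ∑ k, V k i * V k j :=
      congrFun₂ hV i j
    rw [hcorner, hM.apply 0 i.succ] at hVij
    linear_combination hVij
  ext i j
  cases i using Fin.cases <;> cases j using Fin.cases <;>
    simp [blockUpper, Matrix.mul_apply, Fin.sum_univ_succ, hcorner, hM.apply, hblock]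

end Chio

section PosDef

variable {R : Type*} [CommRing R] [LinearOrder R] [IsStrictOrderedRing R] [StarRing R]
  [TrivialStar R] {n : ℕ} {M : Matrix (Fin (n + 1)) (Fin (n + 1)) R}

lemma posDef_chio (hM : M.PosDef) : (chio M).PosDef := by
  have hsymm : M.IsSymm := isHermitian_iff_isSymm.1 hM.isHermitian
  have hcorner : 0 < M 0 0 := hM.diag_pos
  refine .of_dotProduct_mulVec_pos (isHermitian_iff_isSymm.2 (isSymm_chio hsymm)) fun y hy ↦ ?_
  -- `x` lies over a multiple of `y` and is orthogonal to the first basis vector.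
  set x : Fin (n + 1) → R := Fin.cons (-((fun j ↦ M 0 j.succ) ⬝ᵥ y)) (M 0 0 • y) with hx
  have htail : Fin.tail x = M 0 0 • y := Fin.tail_cons _ _
  have hx_ne : x ≠ 0 := fun h ↦
    hy <| (smul_eq_zero.1 (htail.symm.trans (congrArg Fin.tail h))).resolve_left hcorner.ne'
  have horth : (M *ᵥ x) 0 = 0 := by
    simp [hx, mulVec, dotProduct, Fin.sum_univ_succ, Finset.mul_sum, mul_left_comm]
  have hsquare : M 0 0 * (x ⬝ᵥ M *ᵥ x) = M 0 0 * (M 0 0 * (y ⬝ᵥ chio M *ᵥ y)) := by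
    rw [corner_mul_dotProduct_mulVec_self hsymm, horth, htail, mulVec_smul, dotProduct_smul,
      smul_dotProduct, smul_eq_mul, smul_eq_mul]
    ring
  have hpos : 0 < M 0 0 * (y ⬝ᵥ chio M *ᵥ y) := by
    rw [← mul_left_cancel₀ hcorner.ne' hsquare]
    simpa only [star_trivial] using hM.dotProduct_mulVec_pos hx_ne
  simpa only [star_trivial] using pos_of_mul_pos_right hpos hcorner.le

lemma posDef_of_chio (hM : M.IsSymm) (hcorner : 0 < M 0 0) (hchio : (chio M).PosDef) :
    M.PosDef := by
  refine .of_dotProduct_mulVec_pos (isHermitian_iff_isSymm.2 hM) fun x hx ↦ ?_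
  rw [star_trivial]
  refine pos_of_mul_pos_right (a := M 0 0) ?_ hcorner.le
  rw [corner_mul_dotProduct_mulVec_self hM]
  by_cases htail : Fin.tail x = 0
  · have hx_zero : x 0 ≠ 0 := fun h ↦ hx <| funext <| Fin.cases h <| congrFun htail
    have hsucc : ∀ i : Fin n, x i.succ = 0 := congrFun htail
    have hMx : (M *ᵥ x) 0 = M 0 0 * x 0 := by
      simp [mulVec, dotProduct, Fin.sum_univ_succ, hsucc]
    rw [htail, hMx, zero_dotProduct, add_zero]
    positivity
  · have hpos := hchio.dotProduct_mulVec_pos htail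
    rw [star_trivial] at hpos
    positivity

end PosDef

section Hermite

variable {n : ℕ}

lemma exists_isCongruent_forall_corner_le {M : Matrix (Fin (n + 1)) (Fin (n + 1)) ℤ}
    (hM : M.PosDef) :
    ∃ N, IsCongruent M N ∧ ∀ K, IsCongruent N K → ∀ i, N 0 0 ≤ K i i := by
  obtain ⟨_, ⟨N, hMN, rfl⟩, hmin⟩ := Int.exists_least_of_bdd
    (P := fun a ↦ ∃ N, IsCongruent M N ∧ N 0 0 = a)
    ⟨0, fun _ ⟨_, hN, ha⟩ ↦ ha ▸ (hN.posDef hM).diag_pos.le⟩ ⟨_, M, .refl M, rfl⟩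
  refine ⟨N, hMN, fun K hNK i ↦ hmin _ ⟨K.submatrix (Equiv.swap 0 i) (Equiv.swap 0 i), ?_, ?_⟩⟩
  · exact (hMN.trans hNK).trans (.submatrix_perm K _)
  · simp

lemma exists_sq_two_mul_add_mul_le_sq {a : ℤ} (ha : 0 < a) (b : ℤ) :
    ∃ t : ℤ, (2 * (b + a * t)) ^ 2 ≤ a ^ 2 := by
  lift a to ℕ using ha.le
  have ha' : 0 < a := by exact_mod_cast ha
  have hmod := b.bmod_add_bdiv a
  have hlower := Int.le_bmod (x := b) ha'
  have hupper := Int.bmod_lt (x := b) ha'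
  exact ⟨-b.bdiv a, sq_le_sq' (by grind) (by grind)⟩

-- If `S 0 0` is the value of `chio M` at `y`, then `a * Q (t, y) = (a * t + ⋯) ^ 2 + S 0 0` where
-- `a = M 0 0` and `Q` is the form of `M`; choose `t` to make the square at most `a ^ 2 / 4`.
lemma three_mul_sq_corner_le {M : Matrix (Fin (n + 2)) (Fin (n + 2)) ℤ} (hM : M.PosDef)
    (hmin : ∀ K, IsCongruent M K → ∀ i, M 0 0 ≤ K i i)
    {S : Matrix (Fin (n + 1)) (Fin (n + 1)) ℤ} (hS : IsCongruent (chio M) S) :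
    3 * M 0 0 ^ 2 ≤ 4 * S 0 0 := by
  obtain ⟨V, hV, rfl⟩ := hS
  have hcorner : 0 < M 0 0 := hM.diag_pos
  set b := (fun j ↦ M 0 (Fin.succ j)) ⬝ᵥ V.col 0
  obtain ⟨t, ht⟩ := exists_sq_two_mul_add_mul_le_sq hcorner b
  set E := blockUpper 1 (fun _ ↦ t) V
  have hmul : (M *ᵥ E.col 1) 0 = b + M 0 0 * t :=
    (Fin.sum_univ_succ _).trans (add_comm _ _)
  have hsquare : M 0 0 * (Eᵀ * M * E) 1 1 = (b + M 0 0 * t) ^ 2 + (Vᵀ * chio M * V) 0 0 := by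
    rw [transpose_mul_mul_apply_self, transpose_mul_mul_apply_self, ← hmul]
    exact corner_mul_dotProduct_mulVec_self (isHermitian_iff_isSymm.1 hM.isHermitian) (E.col 1)
  have hle : M 0 0 * M 0 0 ≤ M 0 0 * (Eᵀ * M * E) 1 1 :=
    mul_le_mul_of_nonneg_left (hmin _ ⟨E, isUnit_blockUpper_one hV _, rfl⟩ 1) hcorner.le
  linarith

theorem exists_isCongruent_corner_pow_le {M : Matrix (Fin (n + 1)) (Fin (n + 1)) ℤ}
    (hM : M.PosDef) :
    ∃ N, IsCongruent M N ∧
      3 ^ (n + 1).choose 2 * N 0 0 ^ (n + 1) ≤ 4 ^ (n + 1).choose 2 * M.det := by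
  induction n with
  | zero => exact ⟨M, .refl M, by simp⟩
  | succ n ih =>
    obtain ⟨N, hMN, hmin⟩ := exists_isCongruent_forall_corner_le hM
    have hN : N.PosDef := hMN.posDef hM
    have hcorner : 0 < N 0 0 := hN.diag_pos
    obtain ⟨S, hS, hSle⟩ := ih (posDef_chio hN)
    refine ⟨N, hMN, ?_⟩
    rw [← hMN.det_eq, Nat.choose_succ_succ (n + 1) 1, Nat.choose_one_right]
    refine le_of_mul_le_mul_left ?_ (pow_pos hcorner (n + 1))
    generalize (n + 1).choose 2 = c at hSle
    calc N 0 0 ^ (n + 1) * (3 ^ (n + 1 + c) * N 0 0 ^ (n + 1 + 1))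
        = N 0 0 * 3 ^ c * (3 * N 0 0 ^ 2) ^ (n + 1) := by ring
      _ ≤ N 0 0 * 3 ^ c * (4 * S 0 0) ^ (n + 1) := by
          gcongr N 0 0 * 3 ^ c * ?_ ^ (n + 1)
          exact three_mul_sq_corner_le hN hmin hS
      _ = N 0 0 * 4 ^ (n + 1) * (3 ^ c * S 0 0 ^ (n + 1)) := by ring
      _ ≤ N 0 0 * 4 ^ (n + 1) * (4 ^ c * (chio N).det) := by gcongr
      _ = 4 ^ (n + 1 + c) * (N 0 0 * (chio N).det) := by ring
      _ = N 0 0 ^ (n + 1) * (4 ^ (n + 1 + c) * N.det) := by rw [corner_mul_det_chio]; ring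

lemma eq_one_of_three_pow_mul_pow_le {a : ℤ} (ha : 0 < a) (hn : n ≤ 4)
    (h : 3 ^ (n + 1).choose 2 * a ^ (n + 1) ≤ 4 ^ (n + 1).choose 2) : a = 1 := by
  by_contra hne
  have htwo : 2 ≤ a := by omega
  have hle : (3 : ℤ) ^ (n + 1).choose 2 * 2 ^ (n + 1) ≤ 4 ^ (n + 1).choose 2 :=
    le_trans (by gcongr) h
  interval_cases n <;> simp [Nat.choose] at hle

theorem exists_eq_transpose_mul_self_of_det_eq_one (hn : n ≤ 5) {M : Matrix (Fin n) (Fin n) ℤ}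
    (hM : M.PosDef) (hdet : M.det = 1) : ∃ U : Matrix (Fin n) (Fin n) ℤ, M = Uᵀ * U := by
  induction n with
  | zero => exact ⟨1, Subsingleton.elim _ _⟩
  | succ n ih =>
    obtain ⟨N, hMN, hle⟩ := exists_isCongruent_corner_pow_le hM
    have hN : N.PosDef := hMN.posDef hM
    have hcorner : N 0 0 = 1 :=
      eq_one_of_three_pow_mul_pow_le hN.diag_pos (Nat.le_of_succ_le_succ hn)
        (by rwa [hdet, mul_one] at hle)
    have hdet_chio : (chio N).det = 1 := by
      simpa only [hcorner, one_mul, one_pow, hMN.det_eq, hdet] using corner_mul_det_chio N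
    obtain ⟨V, hV⟩ := ih (Nat.le_of_succ_le hn) (posDef_chio hN) hdet_chio
    exact hMN.symm.exists_eq_transpose_mul_self ⟨_,
      eq_transpose_mul_self_of_chio_eq (isHermitian_iff_isSymm.1 hN.isHermitian) hcorner hV⟩

end Hermite

section ThreeSquares

lemma exists_sq_add_sq_add_sq_of_dvd {n b d x : ℤ} (hb : 0 < b) (hd : 0 < d)
    (hbn : b * n = d + 1) (hdvd : d ∣ x ^ 2 + b) : ∃ u v w : ℤ, n = u ^ 2 + v ^ 2 + w ^ 2 := by
  obtain ⟨a, ha⟩ := hdvd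
  set M : Matrix (Fin 3) (Fin 3) ℤ := !![d, x, 0; x, a, 1; 0, 1, n] with hM
  have hdet : M.det = 1 := by
    simp only [hM, det_fin_three, of_apply, cons_val]
    linear_combination (-n) * ha + hbn
  have hchio : chio M = !![b, d; d, d * n] := by
    have hb_eq : d * a - x * x = b := by linear_combination -ha
    ext i j
    fin_cases i <;> fin_cases j <;> simp [chio_apply, hM, hb_eq]
  have hchio_chio : chio (chio M) = diagonal fun _ ↦ d := by
    ext i j
    rw [Subsingleton.elim i 0, Subsingleton.elim j 0, diagonal_apply_eq, hchio, chio_apply]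
    simp only [of_apply, cons_val, Fin.succ_zero_eq_one]
    linear_combination d * hbn
  have hM_symm : M.IsSymm := by
    ext i j
    fin_cases i <;> fin_cases j <;> rfl
  have hM_pos : M.PosDef := by
    refine posDef_of_chio hM_symm hd <| posDef_of_chio (isSymm_chio hM_symm) ?_ ?_
    · simpa [hchio] using hb
    · simpa only [hchio_chio] using PosDef.diagonal fun _ ↦ hd
  obtain ⟨U, hU⟩ := exists_eq_transpose_mul_self_of_det_eq_one (by norm_num) hM_pos hdet
  refine ⟨U 0 2, U 1 2, U 2 2, ?_⟩
  simpa [hM, Matrix.mul_apply, Fin.sum_univ_three, sq] using congrFun₂ hU 2 2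

lemma isSquare_neg_of_dvd_two_mul_add_one {p b : ℕ} [Fact p.Prime] (hp : p % 4 = 1)
    (hb : b % 8 = 1 ∨ b % 8 = 3) (hdvd : b ∣ 2 * p + 1) : IsSquare (-b : ZMod p) := by
  have hp_odd : Odd p := Nat.odd_iff.2 (by omega)
  have hb_odd : Odd b := Nat.odd_iff.2 (by omega)
  have hneg_two_mul : jacobiSym (-2 * p) b = 1 := by
    rw [← jacobiSym.one_left b]
    refine jacobiSym.mod_left' (Int.modEq_iff_dvd.2 ?_)
    rw [show (1 : ℤ) - -2 * p = (2 * p + 1 : ℕ) by push_cast; ring]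
    exact_mod_cast hdvd
  have hneg_two : jacobiSym (-2) b = 1 := by
    rw [jacobiSym.at_neg_two hb_odd, ZMod.χ₈'_nat_eq_if_mod_eight,
      if_neg (by omega), if_pos hb]
  have hpb : jacobiSym p b = 1 := by
    rwa [jacobiSym.mul_left, hneg_two, one_mul] at hneg_two_mul
  have hneg : jacobiSym (-b) p = 1 := by
    rw [jacobiSym.neg _ hp_odd, ZMod.χ₄_nat_one_mod_four hp, one_mul,
      ← jacobiSym.quadratic_reciprocity_one_mod_four hp hb_odd, hpb]
  simpa using ZMod.isSquare_of_jacobiSym_eq_one hneg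

-- Taking `p ≡ (n - 1) / 2 (mod 4 * n)` makes `n` divide `2 * p + 1` with cofactor `1` modulo `8`.
lemma exists_prime_mul_eq_two_mul_add_one {n : ℕ} (hn : n % 8 = 3) :
    ∃ p b : ℕ, p.Prime ∧ p % 4 = 1 ∧ b % 8 = 1 ∧ b * n = 2 * p + 1 := by
  obtain ⟨k, rfl⟩ : ∃ k, n = 8 * k + 3 := ⟨n / 8, by omega⟩
  have hcop : (4 * k + 1).Coprime (4 * (8 * k + 3)) := by
    refine Nat.Coprime.mul_right ?_ ?_
    · rw [show 4 = 2 ^ 2 by norm_num]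
      exact Nat.Coprime.pow_right _ (Nat.coprime_two_right.2 ⟨2 * k, by ring⟩)
    · rw [show 8 * k + 3 = 1 + (4 * k + 1) * 2 by ring]
      simp
  obtain ⟨p, hlt, hp, hmod⟩ := Nat.forall_exists_prime_gt_and_modEq (4 * k + 1) (by omega) hcop
  obtain ⟨v, hv⟩ := (Nat.modEq_iff_dvd' hlt.le).1 hmod.symm
  obtain rfl : p = 4 * k + 1 + 4 * (8 * k + 3) * v := by omega
  exact ⟨_, 8 * v + 1, hp, by rw [mul_assoc]; omega, by omega, by ring⟩

lemma exists_two_mul_dvd_sq_add {p b : ℕ} (hp : Odd p) (hb : Odd b)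
    (hsq : IsSquare (-b : ZMod p)) : ∃ x : ℤ, (2 * p : ℤ) ∣ x ^ 2 + b := by
  obtain ⟨y, hy⟩ := hsq
  obtain ⟨x, rfl⟩ := ZMod.intCast_surjective y
  have hdvd : (p : ℤ) ∣ x ^ 2 + b := by
    rw [← ZMod.intCast_zmod_eq_zero_iff_dvd]
    push_cast
    linear_combination -hy
  obtain ⟨z, hz_odd, hz⟩ : ∃ z : ℤ, Odd z ∧ (p : ℤ) ∣ z ^ 2 + b := by
    rcases Int.even_or_odd x with hx | hx
    · refine ⟨x + p, hx.add_odd (by exact_mod_cast hp), ?_⟩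
      rw [show (x + p) ^ 2 + (b : ℤ) = x ^ 2 + b + p * (2 * x + p) by ring]
      exact dvd_add hdvd (dvd_mul_right _ _)
    · exact ⟨x, hx, hdvd⟩
  have hcop : IsCoprime (2 : ℤ) p := by
    exact_mod_cast Nat.isCoprime_iff_coprime.2 (Nat.coprime_two_left.2 hp)
  exact ⟨z, hcop.mul_dvd (hz_odd.pow.add_odd (by exact_mod_cast hb)).two_dvd hz⟩

theorem exists_sq_add_sq_add_sq_of_mod_eight_eq_three {n : ℕ} (hn : n % 8 = 3) :
    ∃ u v w : ℕ, n = u ^ 2 + v ^ 2 + w ^ 2 := by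
  obtain ⟨p, b, hp, hp_mod, hb_mod, hbn⟩ := exists_prime_mul_eq_two_mul_add_one hn
  have : Fact p.Prime := ⟨hp⟩
  have hsq : IsSquare (-b : ZMod p) :=
    isSquare_neg_of_dvd_two_mul_add_one hp_mod (.inl hb_mod) ⟨n, hbn.symm⟩
  obtain ⟨x, hx⟩ :=
    exists_two_mul_dvd_sq_add (Nat.odd_iff.2 (by omega)) (Nat.odd_iff.2 (by omega)) hsq
  obtain ⟨u, v, w, h⟩ := exists_sq_add_sq_add_sq_of_dvd (n := n) (b := b) (d := 2 * p) (by omega)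
    (by have := hp.pos; omega) (by exact_mod_cast hbn) hx
  exact ⟨u.natAbs, v.natAbs, w.natAbs, by zify; simpa only [sq_abs] using h⟩

end ThreeSquares

lemma sq_mod_four_eq_mod_two (m : ℕ) : m ^ 2 % 4 = m % 2 := by
  rcases m.even_or_odd' with ⟨j, rfl | rfl⟩ <;> ring_nf <;> omega

lemma odd_of_sq_add_sq_add_sq_mod_four {u v w : ℕ} (h : (u ^ 2 + v ^ 2 + w ^ 2) % 4 = 3) :
    Odd u ∧ Odd v ∧ Odd w := by
  have hu := sq_mod_four_eq_mod_two u
  have hv := sq_mod_four_eq_mod_two v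
  have hw := sq_mod_four_eq_mod_two w
  simp only [Nat.odd_iff]
  omega

lemma sq_mod_twenty_le_of_odd {m : ℕ} (hm : Odd m) : m ^ 2 % 20 ≤ 9 := by
  have hlt : m % 20 < 20 := Nat.mod_lt _ (by norm_num)
  have hodd : m % 20 % 2 = 1 := by rw [Nat.odd_iff] at hm; omega
  rw [Nat.pow_mod]
  interval_cases m % 20 <;> simp_all

theorem stmt_5 (N : ℕ) :
    ∃ A B C : ℕ, N = A ^ 2 / 20 + B ^ 2 / 20 + C ^ 2 / 20 := by
  obtain ⟨r, hr, hmod⟩ : ∃ r, (r = 11 ∨ r = 15) ∧ (20 * N + r) % 8 = 3 := by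
    rcases N.even_or_odd' with ⟨j, rfl | rfl⟩
    · exact ⟨11, by omega⟩
    · exact ⟨15, by omega⟩
  obtain ⟨A, B, C, hsum⟩ := exists_sq_add_sq_add_sq_of_mod_eight_eq_three hmod
  obtain ⟨hA, hB, hC⟩ : Odd A ∧ Odd B ∧ Odd C := odd_of_sq_add_sq_add_sq_mod_four (by omega)
  have hA_mod := sq_mod_twenty_le_of_odd hA
  have hB_mod := sq_mod_twenty_le_of_odd hB
  have hC_mod := sq_mod_twenty_le_of_odd hC
  exact ⟨A, B, C, by omega⟩
end

section
/- Every natural number N can be written as the sum of three terms of the sequence (⌊n²/104⌋)_{n∈ℕ}, i.e., there exist natural numbers A, B, C with N = ⌊A²/104⌋ + ⌊B²/104⌋ + ⌊C²/104⌋. -/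
/-!
If `104 * N + 99 = a ^ 2 + b ^ 2 + c ^ 2`, then `a`, `b`, `c` are odd, and an inspection of the odd
squares modulo `104` shows that the three remainders of the squares add up to exactly `99`; hence
the three integer parts add up to `N`. As `104 * N + 99 ≡ 3 [MOD 8]`, such a representation exists
by the three-square theorem.

For `n ≡ 3 [MOD 8]`, Dirichlet's theorem on primes in progressions and quadratic reciprocity give
`d > 0` such that `d * n - 1` divides some `s ^ 2 + d`. From these one writes down a positive
definite integral ternary form of determinant `1` that represents `n`. By Hermite's inequality a
positive definite integral form of determinant `1` in at most five variables takes the value `1`;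
splitting off the square of a linear form and inducting, it is a sum of squares of linear forms.
-/

open Matrix

section SchurComplement

variable {R : Type*} [CommRing R] {n : ℕ}

/-- The Schur complement of the `(0, 0)` entry of `G`, multiplied by that entry so that no division
is needed. For symmetric `G` it is the Gram matrix of the form left after completing the square in
the first variable. -/
def scaledSchurComplement (G : Matrix (Fin (n + 1)) (Fin (n + 1)) R) : Matrix (Fin n) (Fin n) R :=
  of fun i j => G 0 0 * G i.succ j.succ - G i.succ 0 * G 0 j.succ

theorem apply_zero_zero_mul_det_scaledSchurComplement
    (G : Matrix (Fin (n + 1)) (Fin (n + 1)) R) :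
    G 0 0 * (scaledSchurComplement G).det = G 0 0 ^ n * G.det := by
  let scaled : Matrix (Fin (n + 1)) (Fin (n + 1)) R :=
    of fun i j => Fin.cons (α := fun _ => R) 1 (fun _ => G 0 0) i * G i j
  let cleared : Matrix (Fin (n + 1)) (Fin (n + 1)) R :=
    of (Fin.cons (G 0) fun i => Fin.cons 0 (scaledSchurComplement G i))
  have det_scaled : scaled.det = G 0 0 ^ n * G.det := by
    simp [scaled, det_mul_column, Fin.prod_univ_succ]
  have det_cleared : cleared.det = G 0 0 * (scaledSchurComplement G).det := by
    have minor : cleared.submatrix Fin.succ Fin.succ = scaledSchurComplement G := by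
      ext
      simp [cleared]
    rw [det_succ_column_zero, Fin.sum_univ_succ, Fin.succAbove_zero, minor]
    simp [cleared]
  rw [← det_scaled, ← det_cleared]
  refine (det_eq_of_forall_row_eq_smul_add_const
    (Fin.cons 0 fun i => G i.succ 0) 0 (by simp) fun i j => ?_).symm
  cases i using Fin.cases <;> cases j using Fin.cases <;>
    simp [scaled, cleared, scaledSchurComplement, mul_comm]

theorem isSymm_scaledSchurComplement {G : Matrix (Fin (n + 1)) (Fin (n + 1)) R} (hG : G.IsSymm) :
    (scaledSchurComplement G).IsSymm := by
  ext i j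
  simp [scaledSchurComplement, hG.apply i.succ j.succ, hG.apply i.succ 0, hG.apply 0 j.succ,
    mul_comm]

theorem mulVec_apply_zero (G : Matrix (Fin (n + 1)) (Fin (n + 1)) R) (v : Fin (n + 1) → R) :
    (G *ᵥ v) 0 = G 0 0 * v 0 + Fin.tail (G 0) ⬝ᵥ Fin.tail v :=
  Fin.sum_univ_succ _

theorem apply_zero_zero_mul_dotProduct_mulVec {G : Matrix (Fin (n + 1)) (Fin (n + 1)) R}
    (hG : G.IsSymm) (v : Fin (n + 1) → R) :
    G 0 0 * (v ⬝ᵥ G *ᵥ v) =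
      (G *ᵥ v) 0 ^ 2 + Fin.tail v ⬝ᵥ scaledSchurComplement G *ᵥ Fin.tail v := by
  let w : Fin n → R := Fin.tail (G 0)
  let D := G.submatrix Fin.succ Fin.succ
  have head : (G *ᵥ v) 0 = G 0 0 * v 0 + w ⬝ᵥ Fin.tail v := mulVec_apply_zero G v
  have tail : Fin.tail (G *ᵥ v) = v 0 • w + D *ᵥ Fin.tail v := by
    ext i
    simp [mulVec, dotProduct, Fin.sum_univ_succ, w, D, Fin.tail, hG.apply 0 i.succ, mul_comm]
  have split : v ⬝ᵥ G *ᵥ v = v 0 * (G *ᵥ v) 0 + Fin.tail v ⬝ᵥ Fin.tail (G *ᵥ v) :=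
    Fin.sum_univ_succ _
  have schur : scaledSchurComplement G = G 0 0 • D - vecMulVec w w := by
    ext i j
    simp [scaledSchurComplement, w, D, Fin.tail, vecMulVec_apply, hG.apply 0 i.succ]
  rw [split, tail, head, schur, sub_mulVec, smul_mulVec, vecMulVec_mulVec, dotProduct_sub,
    dotProduct_add, dotProduct_smul, dotProduct_smul, dotProduct_smul, dotProduct_comm _ w]
  simp only [smul_eq_mul, MulOpposite.smul_eq_mul_unop, MulOpposite.unop_op]
  ring

theorem exists_eq_transpose_mul_self_of_scaledSchurComplement
    {G : Matrix (Fin (n + 1)) (Fin (n + 1)) R} (hG : G.IsSymm) (h₀ : G 0 0 = 1)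
    {P : Matrix (Fin n) (Fin n) R} (hP : scaledSchurComplement G = Pᵀ * P) :
    ∃ Q : Matrix (Fin (n + 1)) (Fin (n + 1)) R, G = Qᵀ * Q := by
  refine ⟨of (Fin.cons (G 0) fun i => Fin.cons 0 (P i)), ?_⟩
  ext i j
  cases i using Fin.cases with
  | zero => simp [mul_apply, Fin.sum_univ_succ, h₀]
  | succ i =>
    cases j using Fin.cases with
    | zero => simp [mul_apply, Fin.sum_univ_succ, h₀, hG.apply 0 i.succ]
    | succ j =>
      have hij : G i.succ j.succ - G 0 i.succ * G 0 j.succ = ∑ k, P k i * P k j := by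
        simpa [scaledSchurComplement, h₀, hG.apply 0 i.succ, mul_apply] using congr_fun₂ hP i j
      simp [mul_apply, Fin.sum_univ_succ, ← hij]

end SchurComplement

section PosDef

variable {R : Type*} [CommRing R] [LinearOrder R] [IsStrictOrderedRing R] [StarRing R]
  [TrivialStar R] {n : ℕ}

theorem posDef_scaledSchurComplement {G : Matrix (Fin (n + 1)) (Fin (n + 1)) R}
    (hG : G.PosDef) : (scaledSchurComplement G).PosDef := by
  have hsymm : G.IsSymm := isHermitian_iff_isSymm.mp hG.isHermitian
  refine .of_dotProduct_mulVec_pos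
    (isHermitian_iff_isSymm.mpr (isSymm_scaledSchurComplement hsymm)) fun u hu => ?_
  rw [star_trivial]
  let v : Fin (n + 1) → R := Fin.cons (-(Fin.tail (G 0) ⬝ᵥ u)) (G 0 0 • u)
  have h₀ : 0 < G 0 0 := hG.diag_pos
  have hv : v ≠ 0 := fun h => smul_ne_zero h₀.ne' hu (funext fun i => congrFun h i.succ)
  have head : (G *ᵥ v) 0 = 0 := by
    simp [v, mulVec_apply_zero]
  have identity : G 0 0 * (v ⬝ᵥ G *ᵥ v) =
      G 0 0 ^ 2 * (u ⬝ᵥ scaledSchurComplement G *ᵥ u) := by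
    rw [apply_zero_zero_mul_dotProduct_mulVec hsymm, head]
    simp [v, mulVec_smul, sq, mul_assoc]
  have hpos : 0 < v ⬝ᵥ G *ᵥ v := by simpa using hG.dotProduct_mulVec_pos hv
  exact pos_of_mul_pos_right (identity ▸ mul_pos h₀ hpos) (sq_nonneg _)

theorem posDef_of_scaledSchurComplement {G : Matrix (Fin (n + 1)) (Fin (n + 1)) R}
    (hG : G.IsSymm) (h₀ : 0 < G 0 0) (hS : (scaledSchurComplement G).PosDef) : G.PosDef := by
  refine .of_dotProduct_mulVec_pos (isHermitian_iff_isSymm.mpr hG) fun v hv => ?_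
  rw [star_trivial]
  refine pos_of_mul_pos_right ?_ h₀.le
  rw [apply_zero_zero_mul_dotProduct_mulVec hG v]
  by_cases hu : Fin.tail v = 0
  · have hv₀ : v 0 ≠ 0 := fun h =>
      hv (by rw [← Fin.cons_self_tail v, h, hu]; exact cons_zero_zero)
    have head : (G *ᵥ v) 0 = G 0 0 * v 0 := by
      rw [mulVec_apply_zero, hu, dotProduct_zero, add_zero]
    rw [hu, zero_dotProduct, add_zero, head]
    positivity
  · exact add_pos_of_nonneg_of_pos (sq_nonneg _) (by simpa using hS.dotProduct_mulVec_pos hu)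

theorem posDef_of_leading_minors_pos {G : Matrix (Fin 3) (Fin 3) R} (hG : G.IsSymm)
    (h₁ : 0 < G 0 0) (h₂ : 0 < G 0 0 * G 1 1 - G 1 0 * G 0 1) (h₃ : 0 < G.det) : G.PosDef := by
  let S := scaledSchurComplement G
  have hS : S.IsSymm := isSymm_scaledSchurComplement hG
  have hS₂ : 0 < S.det := by
    refine pos_of_mul_pos_right ?_ h₁.le
    rw [apply_zero_zero_mul_det_scaledSchurComplement]
    positivity
  have hS₂' : 0 < scaledSchurComplement S 0 0 := by
    simpa [scaledSchurComplement, det_fin_two, mul_comm] using hS₂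
  refine posDef_of_scaledSchurComplement hG h₁ <|
    posDef_of_scaledSchurComplement hS h₂ <|
    posDef_of_scaledSchurComplement (isSymm_scaledSchurComplement hS) hS₂' <|
    .of_dotProduct_mulVec_pos (Subsingleton.elim _ _) fun v hv =>
      absurd (Subsingleton.elim v 0) hv

end PosDef

section ChangeOfBasis

theorem exists_basis_eq_smul {R M ι : Type*} [Finite ι] [CommRing R] [IsDomain R]
    [IsPrincipalIdealRing R] [AddCommGroup M] [Module R M] (b₀ : Module.Basis ι R M) (v : M)
    (i : ι) :
    ∃ (b : Module.Basis ι R M) (c : R), v = c • b i := by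
  classical
  have := b₀.isTorsionFree
  obtain rfl | hv := eq_or_ne v 0
  · exact ⟨b₀, 0, by simp⟩
  obtain ⟨r, snf⟩ := Submodule.smithNormalForm b₀ (R ∙ v)
  have hr : r = 1 := by
    rw [← Fintype.card_fin r, ← Module.finrank_eq_card_basis snf.bN,
      ← (LinearEquiv.toSpanNonzeroSingleton R M v hv).finrank_eq, Module.finrank_self]
  subst hr
  refine ⟨snf.bM.reindex (Equiv.swap (snf.f 0) i),
    snf.bN.repr ⟨v, Submodule.mem_span_singleton_self v⟩ 0 * snf.a 0, ?_⟩
  have := congrArg Subtype.val (snf.bN.sum_repr ⟨v, Submodule.mem_span_singleton_self v⟩)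
  rw [mul_smul]
  simpa [snf.snf] using this.symm

variable {ι : Type*} [Fintype ι]

theorem dotProduct_transpose_mul_mul_mulVec {R : Type*} [CommRing R] (G U : Matrix ι ι R)
    (v : ι → R) : v ⬝ᵥ (Uᵀ * G * U) *ᵥ v = (U *ᵥ v) ⬝ᵥ G *ᵥ (U *ᵥ v) := by
  rw [← mulVec_mulVec, ← mulVec_mulVec, dotProduct_mulVec, vecMul_transpose]

theorem exists_forall_ne_zero_dotProduct_mulVec_le [Nonempty ι] {G : Matrix ι ι ℤ}
    (hG : G.PosDef) :
    ∃ w ≠ 0, ∀ v ≠ 0, w ⬝ᵥ G *ᵥ w ≤ v ⬝ᵥ G *ᵥ v := by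
  let values : Set ℤ := (fun v => v ⬝ᵥ G *ᵥ v) '' {v | v ≠ 0}
  have bdd : BddBelow values := by
    refine ⟨0, ?_⟩
    rintro _ ⟨v, hv, rfl⟩
    exact (hG.dotProduct_mulVec_pos hv).le
  obtain ⟨w, hw, hmin⟩ := Int.csInf_mem (Set.Nonempty.image _ ⟨1, one_ne_zero⟩) bdd
  exact ⟨w, hw, fun v hv => hmin.trans_le (csInf_le bdd ⟨v, hv, rfl⟩)⟩

variable [DecidableEq ι]

theorem mulVec_ne_zero_of_isUnit_det {R : Type*} [CommRing R] {U : Matrix ι ι R}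
    (hU : IsUnit U.det) {v : ι → R} (hv : v ≠ 0) : U *ᵥ v ≠ 0 := fun h =>
  hv (mulVec_injective_of_isUnit ((isUnit_iff_isUnit_det U).mpr hU) (h.trans (mulVec_zero U).symm))

theorem posDef_transpose_mul_mul {R : Type*} [CommRing R] [PartialOrder R] [StarRing R]
    [TrivialStar R] {G U : Matrix ι ι R} (hG : G.PosDef) (hU : IsUnit U.det) :
    (Uᵀ * G * U).PosDef := by
  rw [← conjTranspose_eq_transpose_of_trivial]
  exact hG.conjTranspose_mul_mul_same
    (mulVec_injective_of_isUnit ((isUnit_iff_isUnit_det U).mpr hU))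

theorem det_transpose_mul_mul {G U : Matrix ι ι ℤ} (hU : IsUnit U.det) :
    (Uᵀ * G * U).det = G.det := by
  rw [det_mul, det_mul, det_transpose, mul_right_comm, Int.isUnit_mul_self hU, one_mul]

theorem exists_eq_transpose_mul_self_of_transpose_mul_mul {R : Type*} [CommRing R]
    {G U Q : Matrix ι ι R} (hU : IsUnit U.det) (hQ : Uᵀ * G * U = Qᵀ * Q) :
    ∃ P : Matrix ι ι R, G = Pᵀ * P := by
  refine ⟨Q * U⁻¹, ?_⟩
  have hUt : IsUnit Uᵀ.det := by rwa [det_transpose]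
  calc
    G = Uᵀ⁻¹ * (Uᵀ * G * U) * U⁻¹ := by
      rw [Matrix.mul_assoc Uᵀ, nonsing_inv_mul_cancel_left _ _ hUt,
        mul_nonsing_inv_cancel_right _ _ hU]
    _ = (Q * U⁻¹)ᵀ * (Q * U⁻¹) := by
      simp only [hQ, transpose_mul, transpose_nonsing_inv, Matrix.mul_assoc]

theorem exists_isUnit_det_apply_le {G : Matrix ι ι ℤ} (hG : G.PosDef) (i : ι) :
    ∃ U : Matrix ι ι ℤ, IsUnit U.det ∧
      ∀ v ≠ 0, (Uᵀ * G * U) i i ≤ v ⬝ᵥ (Uᵀ * G * U) *ᵥ v := by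
  have : Nonempty ι := ⟨i⟩
  obtain ⟨w, hw, hmin⟩ := exists_forall_ne_zero_dotProduct_mulVec_le hG
  obtain ⟨b, c, rfl⟩ := exists_basis_eq_smul (Pi.basisFun ℤ ι) w i
  obtain ⟨hc, hb⟩ := smul_ne_zero_iff.mp hw
  let U := (Pi.basisFun ℤ ι).toMatrix b
  have hU : IsUnit U.det :=
    have := (Pi.basisFun ℤ ι).invertibleToMatrix b
    isUnit_det_of_invertible _
  have hUi : U *ᵥ Pi.single i 1 = b i := by
    ext j
    simp [U, Module.Basis.toMatrix]
  refine ⟨U, hU, fun v hv => ?_⟩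
  calc
    (Uᵀ * G * U) i i = b i ⬝ᵥ G *ᵥ b i := by
      rw [← hUi, ← dotProduct_transpose_mul_mul_mulVec]
      simp
    _ ≤ c ^ 2 * (b i ⬝ᵥ G *ᵥ b i) :=
      le_mul_of_one_le_left (hG.dotProduct_mulVec_pos hb).le (sq_pos_of_ne_zero hc)
    _ = (c • b i) ⬝ᵥ G *ᵥ (c • b i) := by
      rw [mulVec_smul, smul_dotProduct, dotProduct_smul, smul_smul, ← sq, smul_eq_mul]
    _ ≤ (U *ᵥ v) ⬝ᵥ G *ᵥ (U *ᵥ v) := hmin _ (mulVec_ne_zero_of_isUnit_det hU hv)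
    _ = v ⬝ᵥ (Uᵀ * G * U) *ᵥ v := (dotProduct_transpose_mul_mul_mulVec G U v).symm

end ChangeOfBasis

section Hermite

variable {n : ℕ}

theorem exists_two_mul_abs_mul_add_le {a : ℤ} (ha : 0 < a) (c : ℤ) :
    ∃ k : ℤ, 2 * |a * k + c| ≤ a := by
  refine ⟨-((2 * c + a) / (2 * a)), ?_⟩
  have h := Int.emod_add_mul_ediv (2 * c + a) (2 * a)
  have h₁ := Int.emod_lt_of_pos (2 * c + a) (show 0 < 2 * a by lia)
  have h₂ := Int.emod_nonneg (2 * c + a) (show 2 * a ≠ 0 by lia)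
  grind

theorem three_mul_sq_le_scaledSchurComplement {G : Matrix (Fin (n + 1)) (Fin (n + 1)) ℤ}
    (hG : G.IsSymm) (h₀ : 0 < G 0 0) (hmin : ∀ v ≠ 0, G 0 0 ≤ v ⬝ᵥ G *ᵥ v)
    {u : Fin n → ℤ} (hu : u ≠ 0) :
    3 * G 0 0 ^ 2 ≤ 4 * (u ⬝ᵥ scaledSchurComplement G *ᵥ u) := by
  obtain ⟨k, hk⟩ := exists_two_mul_abs_mul_add_le h₀ (Fin.tail (G 0) ⬝ᵥ u)
  let v : Fin (n + 1) → ℤ := Fin.cons k u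
  have hv : v ≠ 0 := fun h => hu (funext fun i => congrFun h i.succ)
  have head : (G *ᵥ v) 0 = G 0 0 * k + Fin.tail (G 0) ⬝ᵥ u := by
    simp [v, mulVec_apply_zero]
  have head_sq : (2 * (G *ᵥ v) 0) ^ 2 ≤ G 0 0 ^ 2 := by
    rw [head]
    exact sq_le_sq.mpr (by rwa [abs_mul, abs_two, abs_of_pos h₀])
  have minimal : G 0 0 * G 0 0 ≤ G 0 0 * (v ⬝ᵥ G *ᵥ v) :=
    mul_le_mul_of_nonneg_left (hmin v hv) h₀.le
  have identity : G 0 0 * (v ⬝ᵥ G *ᵥ v) =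
      (G *ᵥ v) 0 ^ 2 + u ⬝ᵥ scaledSchurComplement G *ᵥ u :=
    apply_zero_zero_mul_dotProduct_mulVec hG v
  linarith

theorem three_pow_mul_pow_le_of_scaledSchurComplement {H : Matrix (Fin (n + 1)) (Fin (n + 1)) ℤ}
    (h₀ : 0 < H 0 0) (hS : 3 ^ n.choose 2 * (3 * H 0 0 ^ 2) ^ n ≤
      4 ^ n.choose 2 * ((4 : ℤ) • scaledSchurComplement H).det) :
    3 ^ (n + 1).choose 2 * H 0 0 ^ (n + 1) ≤ 4 ^ (n + 1).choose 2 * H.det := by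
  have hchoose : (n + 1).choose 2 = n.choose 2 + n := by
    rw [Nat.choose_succ_succ', Nat.choose_one_right, add_comm]
  refine le_of_mul_le_mul_left (a := H 0 0 ^ n) ?_ (pow_pos h₀ n)
  calc
    H 0 0 ^ n * (3 ^ (n + 1).choose 2 * H 0 0 ^ (n + 1))
        = H 0 0 * (3 ^ n.choose 2 * (3 * H 0 0 ^ 2) ^ n) := by rw [hchoose]; ring
    _ ≤ H 0 0 * (4 ^ n.choose 2 * ((4 : ℤ) • scaledSchurComplement H).det) := by gcongr
    _ = 4 ^ (n + 1).choose 2 * (H 0 0 * (scaledSchurComplement H).det) := by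
      rw [hchoose, det_smul, Fintype.card_fin]; ring
    _ = H 0 0 ^ n * (4 ^ (n + 1).choose 2 * H.det) := by
      rw [apply_zero_zero_mul_det_scaledSchurComplement]; ring

/-- Hermite's inequality `m ≤ (4 / 3) ^ ((n - 1) / 2) * det G ^ (1 / n)`, cleared of denominators
and roots. -/
theorem three_pow_mul_pow_le_four_pow_mul_det {G : Matrix (Fin n) (Fin n) ℤ} (hG : G.PosDef)
    {m : ℤ} (hm : 0 ≤ m) (hmin : ∀ v ≠ 0, m ≤ v ⬝ᵥ G *ᵥ v) :
    3 ^ n.choose 2 * m ^ n ≤ 4 ^ n.choose 2 * G.det := by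
  induction n generalizing m with
  | zero => simp
  | succ n ih =>
    obtain ⟨U, hU, hUmin⟩ := exists_isUnit_det_apply_le hG 0
    have hm_le : m ≤ (Uᵀ * G * U) 0 0 := by
      have he : (Pi.single 0 1 : Fin (n + 1) → ℤ) ≠ 0 := by simp
      have hle := hmin _ (mulVec_ne_zero_of_isUnit_det hU he)
      rw [← dotProduct_transpose_mul_mul_mulVec] at hle
      simpa using hle
    have hH : (Uᵀ * G * U).PosDef := posDef_transpose_mul_mul hG hU
    rw [← det_transpose_mul_mul hU]
    generalize Uᵀ * G * U = H at *
    have h₀ : 0 < H 0 0 := hH.diag_pos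
    have hS := ih ((posDef_scaledSchurComplement hH).smul (show (0 : ℤ) < 4 by simp))
      (m := 3 * H 0 0 ^ 2) (by positivity) fun u hu => by
        rw [smul_mulVec, dotProduct_smul]
        exact three_mul_sq_le_scaledSchurComplement
          (isHermitian_iff_isSymm.mp hH.isHermitian) h₀ hUmin hu
    calc
      3 ^ (n + 1).choose 2 * m ^ (n + 1) ≤ 3 ^ (n + 1).choose 2 * H 0 0 ^ (n + 1) := by gcongr
      _ ≤ 4 ^ (n + 1).choose 2 * H.det := three_pow_mul_pow_le_of_scaledSchurComplement h₀ hS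

theorem eq_one_of_three_pow_mul_pow_le_four_pow (hn : n ≤ 4) {a : ℤ} (ha : 0 < a)
    (h : 3 ^ (n + 1).choose 2 * a ^ (n + 1) ≤ 4 ^ (n + 1).choose 2) : a = 1 := by
  by_contra hne
  have two_le : 2 ≤ a := by lia
  have not_le : ¬ (3 : ℤ) ^ (n + 1).choose 2 * 2 ^ (n + 1) ≤ 4 ^ (n + 1).choose 2 := by
    interval_cases n <;> simp [Nat.choose]
  exact not_le (le_trans (by gcongr) h)

theorem exists_eq_transpose_mul_self_of_det_eq_one_s8 (hn : n ≤ 5) {G : Matrix (Fin n) (Fin n) ℤ}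
    (hG : G.PosDef) (hdet : G.det = 1) : ∃ P : Matrix (Fin n) (Fin n) ℤ, G = Pᵀ * P := by
  induction n with
  | zero => exact ⟨1, Subsingleton.elim _ _⟩
  | succ n ih =>
    obtain ⟨U, hU, hmin⟩ := exists_isUnit_det_apply_le hG 0
    suffices ∃ Q : Matrix (Fin (n + 1)) (Fin (n + 1)) ℤ, Uᵀ * G * U = Qᵀ * Q by
      obtain ⟨Q, hQ⟩ := this
      exact exists_eq_transpose_mul_self_of_transpose_mul_mul hU hQ
    have hH : (Uᵀ * G * U).PosDef := posDef_transpose_mul_mul hG hU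
    have hHdet : (Uᵀ * G * U).det = 1 := (det_transpose_mul_mul hU).trans hdet
    generalize Uᵀ * G * U = H at *
    have h₀ : H 0 0 = 1 := by
      refine eq_one_of_three_pow_mul_pow_le_four_pow (n := n) (by lia) hH.diag_pos ?_
      simpa [hHdet] using three_pow_mul_pow_le_four_pow_mul_det hH hH.diag_pos.le hmin
    have hSdet : (scaledSchurComplement H).det = 1 := by
      simpa [h₀, hHdet] using apply_zero_zero_mul_det_scaledSchurComplement H
    obtain ⟨P, hP⟩ := ih (by lia) (posDef_scaledSchurComplement hH) hSdet
    exact exists_eq_transpose_mul_self_of_scaledSchurComplement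
      (isHermitian_iff_isSymm.mp hH.isHermitian) h₀ hP

end Hermite

section ThreeSquares

theorem exists_eq_sq_add_sq_add_sq_of_dvd {n d s : ℤ} (hd : 0 < d) (hm : 0 < d * n - 1)
    (h : d * n - 1 ∣ s ^ 2 + d) : ∃ x y z : ℤ, n = x ^ 2 + y ^ 2 + z ^ 2 := by
  obtain ⟨a, ha⟩ := h
  have ha₀ : 0 < a := pos_of_mul_pos_right (ha ▸ by positivity) hm.le
  let G : Matrix (Fin 3) (Fin 3) ℤ := !![a, s, 1; s, d * n - 1, 0; 1, 0, n]
  have hdet : G.det = 1 := by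
    simp only [G, det_fin_three, of_apply, cons_val', cons_val_zero, cons_val_fin_one, cons_val_one,
      cons_val]
    linear_combination -n * ha
  have hsymm : G.IsSymm := by
    ext i j
    fin_cases i <;> fin_cases j <;> rfl
  have minor_eq : a * (d * n - 1) - s * s = d := by linear_combination -ha
  have hG : G.PosDef :=
    posDef_of_leading_minors_pos hsymm ha₀ (minor_eq.symm ▸ hd) (hdet ▸ one_pos)
  obtain ⟨P, hP⟩ := exists_eq_transpose_mul_self_of_det_eq_one_s8 (by lia) hG hdet
  refine ⟨P 0 2, P 1 2, P 2 2, ?_⟩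
  simpa [G, mul_apply, Fin.sum_univ_three, ← sq] using congr_fun₂ hP 2 2

theorem exists_prime_two_mul_add_one_eq_mul {n : ℕ} (hn : n % 8 = 3) :
    ∃ p d : ℕ, p.Prime ∧ p % 4 = 1 ∧ d % 8 = 1 ∧ 2 * p + 1 = d * n := by
  obtain ⟨t, rfl⟩ : ∃ t, n = 8 * t + 3 := ⟨n / 8, by lia⟩
  have hcop : Nat.Coprime (4 * t + 1) (4 * (8 * t + 3)) := by
    refine Nat.Coprime.mul_right ?_ ?_ <;> rw [← Nat.isCoprime_iff_coprime]
    · exact ⟨1, -t, by push_cast; ring⟩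
    · exact ⟨-2, 1, by push_cast; ring⟩
  obtain ⟨p, hlt, hp, hmod⟩ := Nat.forall_exists_prime_gt_and_modEq (4 * t + 1) (by lia) hcop
  obtain ⟨v, hv⟩ := (Nat.modEq_iff_dvd' hlt.le).mp hmod.symm
  have hp_eq : p = 4 * ((8 * t + 3) * v) + (4 * t + 1) := by lia
  exact ⟨p, 8 * v + 1, hp, by lia, by lia, by rw [hp_eq]; ring⟩

theorem isSquare_neg_zmod_of_dvd {p d : ℕ} (hp : p.Prime) (hp₄ : p % 4 = 1)
    (hd₈ : d % 8 = 1 ∨ d % 8 = 3) (h : d ∣ 2 * p + 1) : IsSquare (-(d : ZMod p)) := by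
  have : Fact p.Prime := ⟨hp⟩
  have hd : Odd d := Nat.odd_iff.mpr (by lia)
  have hp_odd : Odd p := Nat.odd_iff.mpr (by lia)
  have neg_two_mul : jacobiSym (-2 * p) d = 1 := by
    have : -2 * (p : ℤ) ≡ 1 [ZMOD d] := by
      refine Int.modEq_iff_dvd.mpr ?_
      convert Int.natCast_dvd_natCast.mpr h using 1
      push_cast; ring
    rw [jacobiSym.mod_left, this, ← jacobiSym.mod_left, jacobiSym.one_left]
  have neg_two : jacobiSym (-2) d = 1 := by
    rw [jacobiSym.at_neg_two hd, ZMod.χ₈'_nat_eq_if_mod_eight]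
    lia
  have legendre : legendreSym p (-d) = 1 := by
    calc
      legendreSym p (-d) = jacobiSym (-1) p * jacobiSym d p := by
        rw [jacobiSym.legendreSym.to_jacobiSym, neg_eq_neg_one_mul, jacobiSym.mul_left]
      _ = jacobiSym p d := by
        rw [jacobiSym.at_neg_one hp_odd, ZMod.χ₄_nat_one_mod_four hp₄, one_mul,
          jacobiSym.quadratic_reciprocity_one_mod_four' hd hp₄]
      _ = jacobiSym (-2 * p) d := by rw [jacobiSym.mul_left, neg_two, one_mul]
      _ = 1 := neg_two_mul
  have hne : ((-(d : ℤ) : ℤ) : ZMod p) ≠ 0 := fun h₀ => by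
    simp [(legendreSym.eq_zero_iff p _).mpr h₀] at legendre
  simpa using (legendreSym.eq_one_iff p hne).mp legendre

theorem exists_sq_add_dvd_two_mul {p d : ℕ} (hp : Odd p) (hd : Odd d)
    (h : IsSquare (-(d : ZMod p))) : ∃ s : ℤ, 2 * (p : ℤ) ∣ s ^ 2 + d := by
  obtain ⟨r, hr⟩ := h
  obtain ⟨s, rfl⟩ := ZMod.intCast_surjective r
  have hs : (p : ℤ) ∣ s ^ 2 + d := by
    rw [← ZMod.intCast_zmod_eq_zero_iff_dvd]
    push_cast
    rw [sq, ← hr, neg_add_cancel]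
  have hp' : Odd (p : ℤ) := mod_cast hp
  have hd' : Odd (d : ℤ) := mod_cast hd
  have hcop : IsCoprime (2 : ℤ) p := Int.isCoprime_two_left.mpr hp'
  obtain ⟨t, ht, hodd⟩ : ∃ t : ℤ, (p : ℤ) ∣ t ^ 2 + d ∧ Odd t := by
    obtain heven | hodd := Int.even_or_odd s
    · refine ⟨s + p, ?_, heven.add_odd hp'⟩
      rw [show (s + p) ^ 2 + (d : ℤ) = s ^ 2 + d + p * (2 * s + p) by ring]
      exact dvd_add hs (dvd_mul_right _ _)
    · exact ⟨s, hs, hodd⟩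
  exact ⟨t, hcop.mul_dvd (hodd.pow.add_odd hd').two_dvd ht⟩

theorem exists_eq_sq_add_sq_add_sq_of_mod_eight_eq_three {n : ℕ} (hn : n % 8 = 3) :
    ∃ x y z : ℕ, n = x ^ 2 + y ^ 2 + z ^ 2 := by
  obtain ⟨p, d, hp, hp₄, hd₈, hpd⟩ := exists_prime_two_mul_add_one_eq_mul hn
  obtain ⟨s, hs⟩ := exists_sq_add_dvd_two_mul (Nat.odd_iff.mpr (by lia)) (Nat.odd_iff.mpr (by lia))
    (isSquare_neg_zmod_of_dvd hp hp₄ (.inl hd₈) (Dvd.intro n hpd.symm))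
  have hm : (d : ℤ) * n - 1 = 2 * p := by
    rw [sub_eq_iff_eq_add]
    exact_mod_cast hpd.symm
  obtain ⟨x, y, z, hxyz⟩ := exists_eq_sq_add_sq_add_sq_of_dvd (n := n) (d := d) (s := s)
    (by lia) (by have := hp.pos; lia) (hm ▸ hs)
  exact ⟨x.natAbs, y.natAbs, z.natAbs, by zify; simpa using hxyz⟩

end ThreeSquares

section ModOneHundredFour

/-- The residues of the odd squares modulo `104`: the squares modulo `13`, lifted to be congruent to
`1` modulo `8`. -/
def oddSquareResidues : Finset ℕ :=
  {1, 9, 17, 25, 49, 65, 81}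

theorem sq_mod_104_mem_oddSquareResidues {a : ℕ} (ha : Odd a) :
    a ^ 2 % 104 ∈ oddSquareResidues := by
  have residues : ∀ r < 104, r % 2 = 1 → r ^ 2 % 104 ∈ oddSquareResidues := by decide
  rw [Nat.pow_mod]
  exact residues _ (Nat.mod_lt _ (by lia)) (by have := Nat.odd_iff.mp ha; lia)

theorem odd_of_sq_add_sq_add_sq_mod_four_s8 {a b c : ℕ} (h : (a ^ 2 + b ^ 2 + c ^ 2) % 4 = 3) :
    Odd a ∧ Odd b ∧ Odd c := by
  have sq_mod_four (x : ℕ) : x ^ 2 % 4 = x % 2 := by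
    obtain ⟨k, rfl | rfl⟩ := Nat.even_or_odd' x <;> ring_nf <;> lia
  have ha := sq_mod_four a
  have hb := sq_mod_four b
  have hc := sq_mod_four c
  simp only [Nat.odd_iff]
  lia

theorem sq_mod_104_add_eq {a b c : ℕ} (h : (a ^ 2 + b ^ 2 + c ^ 2) % 104 = 99) :
    a ^ 2 % 104 + b ^ 2 % 104 + c ^ 2 % 104 = 99 := by
  have sums : ∀ x ∈ oddSquareResidues, ∀ y ∈ oddSquareResidues, ∀ z ∈ oddSquareResidues,
      (x + y + z) % 104 = 99 → x + y + z = 99 := by decide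
  obtain ⟨ha, hb, hc⟩ := odd_of_sq_add_sq_add_sq_mod_four_s8 (a := a) (b := b) (c := c) (by lia)
  exact sums _ (sq_mod_104_mem_oddSquareResidues ha) _ (sq_mod_104_mem_oddSquareResidues hb)
    _ (sq_mod_104_mem_oddSquareResidues hc) (by lia)

end ModOneHundredFour

theorem stmt_8 (N : ℕ) :
    ∃ A B C : ℕ, N = A ^ 2 / 104 + B ^ 2 / 104 + C ^ 2 / 104 := by
  obtain ⟨a, b, c, habc⟩ :=
    exists_eq_sq_add_sq_add_sq_of_mod_eight_eq_three (n := 104 * N + 99) (by lia)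
  have remainders : a ^ 2 % 104 + b ^ 2 % 104 + c ^ 2 % 104 = 99 := sq_mod_104_add_eq (by lia)
  exact ⟨a, b, c, by lia⟩
end
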